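/- For every integer N ≥ 2 and every integer k with 0 ≤ k < N, one has S(k) · S(N-1-k) = N. -/

import Mathlib

open Real Finset

/-- `S N k = ∏_{j=1}^{k} (2 sin(ω j / 2))` with `ω = 2π/N`, so `ω j / 2 = π j / N`. -/
noncomputable def S (N k : ℕ) : ℝ := ∏ j ∈ Finset.Icc 1 k, (2 * Real.sin (π * j / N))

lemma S_eq_range (N k : ℕ) :
    S N k = ∏ j ∈ Finset.range k, (2 * Real.sin (π * ((j + 1 : ℕ) : ℝ) / N)) := by
  unfold S
  induction k with
  | zero => simp
  | succ k ih => rw [Finset.prod_Icc_succ_top (by omega), ih, Finset.prod_range_succ]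

lemma S_full (n : ℕ) : S (n + 1) n = n + 1 := by
  have h := (Complex.isPrimitiveRoot_exp (n + 1) (by omega)).prod_one_sub_pow_eq_order
  have h2 := congrArg norm h
  rw [norm_prod] at h2
  have h3 : ‖((n : ℂ) + 1)‖ = (n : ℝ) + 1 := by
    have := Complex.norm_natCast (n + 1)
    push_cast at this
    exact this
  rw [h3] at h2
  rw [S_eq_range, ← h2]
  refine Finset.prod_congr rfl fun j hj => ?_
  have hj' : j < n := Finset.mem_range.1 hj
  have hn : (0 : ℝ) < ((n + 1 : ℕ) : ℝ) := by positivity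
  have e : Complex.exp (2 * π * Complex.I / ((n + 1 : ℕ) : ℂ)) ^ (j + 1)
      = Complex.exp (Complex.I * ((2 * (π * ((j + 1 : ℕ) : ℝ) / ((n + 1 : ℕ) : ℝ)) : ℝ) : ℂ)) := by
    rw [← Complex.exp_nat_mul]
    congr 1
    push_cast
    ring
  rw [e, norm_sub_rev, Complex.norm_exp_I_mul_ofReal_sub_one, mul_div_cancel_left₀ _ two_ne_zero,
    Real.norm_of_nonneg]
  refine mul_nonneg zero_le_two (Real.sin_nonneg_of_nonneg_of_le_pi (by positivity) ?_)
  rw [div_le_iff₀ hn]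
  have : ((j + 1 : ℕ) : ℝ) ≤ ((n + 1 : ℕ) : ℝ) := by exact_mod_cast (by omega)
  exact mul_le_mul_of_nonneg_left this Real.pi_pos.le

theorem stmt_1 (N : ℕ) (hN : 2 ≤ N) (k : ℕ) (hk : k < N) :
    S N k * S N (N - 1 - k) = N := by
  obtain ⟨m, rfl⟩ : ∃ m, N = k + m + 1 := ⟨N - 1 - k, by omega⟩
  have hm : k + m + 1 - 1 - k = m := by omega
  rw [hm]
  have h := S_full (k + m)
  push_cast at h ⊢
  rw [← h, S_eq_range _ (k + m), Finset.prod_range_add, ← S_eq_range]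
  congr 1
  rw [S_eq_range, ← Finset.prod_range_reflect]
  refine Finset.prod_congr rfl fun j hj => ?_
  have hj' : j < m := Finset.mem_range.1 hj
  congr 1
  rw [← Real.sin_pi_sub]
  congr 1
  have e : m - 1 - j + 1 = m - j := by omega
  rw [e, Nat.cast_sub hj'.le]
  have hn : ((k + m + 1 : ℕ) : ℝ) ≠ 0 := by positivity
  field_simp
  push_cast
  ring
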